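/- For any two stationary policies π_i and π_j in a finite MDP with reward bounded by r_max, discount factor γ ∈ [0,1), and any initial state distribution μ, the expected value difference ΔV(s) = V^{π_i}(s) − V^{π_j}(s) satisfies (1 − γ) Σ_s μ(s) ΔV(s) ≤ (2 r_max / (1 − γ)) · max_{s ∈ S} D_TV(π_i(·|s), π_j(·|s)). -/

import Mathlib

/-!
The gap between two value functions splits into a policy change evaluated on a fixed action-value
function, which the total variation distance controls, and a term which is a `γ`-contraction of the
gap itself. A function with `‖f s‖ ≤ b + γ * ‖f‖` for all `s` has `‖f‖ ≤ b / (1 - γ)`; this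
absorption bounds a single value function (`b` the reward bound) and then the gap.
-/

section FiniteSums

variable {X E : Type*} [Fintype X] [SeminormedAddCommGroup E]

theorem pi_norm_le_div_one_sub [Nonempty X] {f : X → E} {b γ : ℝ} (hγ : γ < 1)
    (hf : ∀ x, ‖f x‖ ≤ b + γ * ‖f‖) : ‖f‖ ≤ b / (1 - γ) := by
  have self_bound : ‖f‖ ≤ b + γ * ‖f‖ := (pi_norm_le_iff_of_nonempty f).mpr hf
  rw [le_div_iff₀ (sub_pos.mpr hγ)]
  linarith

variable [NormedSpace ℝ E]

/-- The total variation distance of two probability vectors, as half their `ℓ¹` distance. -/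
noncomputable def tvDist (p q : X → ℝ) : ℝ :=
  (1 / 2 : ℝ) * ∑ x, |p x - q x|

theorem norm_sum_smul_le_of_mem_stdSimplex {w : X → ℝ} (hw : w ∈ stdSimplex ℝ X) {f : X → E}
    {c : ℝ} (hf : ∀ x, ‖f x‖ ≤ c) : ‖∑ x, w x • f x‖ ≤ c :=
  mem_closedBall_zero_iff.mp <| (convex_closedBall 0 c).sum_mem (fun x _ => hw.1 x) hw.2
    fun x _ => mem_closedBall_zero_iff.mpr (hf x)

theorem norm_sum_sub_smul_le_tvDist (p q : X → ℝ) {f : X → E} {c : ℝ} (hf : ∀ x, ‖f x‖ ≤ c) :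
    ‖∑ x, (p x - q x) • f x‖ ≤ 2 * c * tvDist p q :=
  calc ‖∑ x, (p x - q x) • f x‖ ≤ ∑ x, |p x - q x| * c :=
        norm_sum_le_of_le _ fun x _ => by
          rw [norm_smul, Real.norm_eq_abs]
          exact mul_le_mul_of_nonneg_left (hf x) (abs_nonneg _)
    _ = 2 * c * tvDist p q := by rw [← Finset.sum_mul, tvDist]; ring

end FiniteSums

section ValueFunctions

variable {S A E : Type*} [Fintype S] [SeminormedAddCommGroup E] [NormedSpace ℝ E]
  {P : S → A → S → ℝ} {r : S → A → E} {rmax γ : ℝ} {π ρ : S → A → ℝ} {V W : S → E}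

/-- The one-step lookahead `r(s,a) + γ ∑ P(s'|s,a) V(s')`, which is the action-value function
`Q^π` when `V = V^π`. Rewards may be vector-valued. -/
noncomputable def actionValue (P : S → A → S → ℝ) (r : S → A → E) (γ : ℝ) (V : S → E)
    (s : S) (a : A) : E :=
  r s a + γ • ∑ s', P s a s' • V s'

theorem norm_actionValue_le (hP : ∀ s a, P s a ∈ stdSimplex ℝ S) (hr : ∀ s a, ‖r s a‖ ≤ rmax)
    (hγ0 : 0 ≤ γ) (V : S → E) (s : S) (a : A) :
    ‖actionValue P r γ V s a‖ ≤ rmax + γ * ‖V‖ := by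
  refine norm_add_le_of_le (hr s a) ?_
  rw [norm_smul_of_nonneg hγ0]
  exact mul_le_mul_of_nonneg_left
    (norm_sum_smul_le_of_mem_stdSimplex (hP s a) (norm_le_pi_norm V)) hγ0

theorem norm_actionValue_sub_le (hP : ∀ s a, P s a ∈ stdSimplex ℝ S) (r : S → A → E)
    (hγ0 : 0 ≤ γ) (V W : S → E) (s : S) (a : A) :
    ‖actionValue P r γ V s a - actionValue P r γ W s a‖ ≤ γ * ‖V - W‖ := by
  have lookahead_sub : actionValue P r γ V s a - actionValue P r γ W s a =
      γ • ∑ s', P s a s' • (V - W) s' := by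
    simp only [actionValue, add_sub_add_left_eq_sub, ← smul_sub, ← Finset.sum_sub_distrib,
      Pi.sub_apply]
  rw [lookahead_sub, norm_smul_of_nonneg hγ0]
  exact mul_le_mul_of_nonneg_left
    (norm_sum_smul_le_of_mem_stdSimplex (hP s a) (norm_le_pi_norm (V - W))) hγ0

variable [Fintype A]

/-- `V` is a value function `V^π` of the policy `π`: it solves the Bellman equation of `π`. -/
def IsValueFunction (P : S → A → S → ℝ) (r : S → A → E) (γ : ℝ) (π : S → A → ℝ)
    (V : S → E) : Prop :=
  ∀ s, V s = ∑ a, π s a • actionValue P r γ V s a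

namespace IsValueFunction

theorem norm_le [Nonempty S] (hV : IsValueFunction P r γ π V)
    (hP : ∀ s a, P s a ∈ stdSimplex ℝ S) (hr : ∀ s a, ‖r s a‖ ≤ rmax) (hγ0 : 0 ≤ γ)
    (hγ1 : γ < 1) (hπ : ∀ s, π s ∈ stdSimplex ℝ A) : ‖V‖ ≤ rmax / (1 - γ) :=
  pi_norm_le_div_one_sub hγ1 fun s => (congrArg norm (hV s)).trans_le <|
    norm_sum_smul_le_of_mem_stdSimplex (hπ s) (norm_actionValue_le hP hr hγ0 V s)

theorem norm_actionValue_le [Nonempty S] (hV : IsValueFunction P r γ π V)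
    (hP : ∀ s a, P s a ∈ stdSimplex ℝ S) (hr : ∀ s a, ‖r s a‖ ≤ rmax) (hγ0 : 0 ≤ γ)
    (hγ1 : γ < 1) (hπ : ∀ s, π s ∈ stdSimplex ℝ A) (s : S) (a : A) :
    ‖actionValue P r γ V s a‖ ≤ rmax / (1 - γ) :=
  calc ‖actionValue P r γ V s a‖ ≤ rmax + γ * ‖V‖ := _root_.norm_actionValue_le hP hr hγ0 V s a
    _ ≤ rmax + γ * (rmax / (1 - γ)) := by
        gcongr
        exact hV.norm_le hP hr hγ0 hγ1 hπ
    _ = rmax / (1 - γ) := by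
        have : 1 - γ ≠ 0 := (sub_pos.mpr hγ1).ne'
        field_simp
        ring

theorem sub_apply_eq (hV : IsValueFunction P r γ π V) (hW : IsValueFunction P r γ ρ W) (s : S) :
    V s - W s = ∑ a, (π s a - ρ s a) • actionValue P r γ W s a +
      ∑ a, π s a • (actionValue P r γ V s a - actionValue P r γ W s a) := by
  rw [hV s, hW s, ← Finset.sum_sub_distrib, ← Finset.sum_add_distrib]
  refine Finset.sum_congr rfl fun a _ => ?_
  module

theorem norm_sub_le [Nonempty S] (hV : IsValueFunction P r γ π V)
    (hW : IsValueFunction P r γ ρ W) (hP : ∀ s a, P s a ∈ stdSimplex ℝ S)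
    (hr : ∀ s a, ‖r s a‖ ≤ rmax) (hγ0 : 0 ≤ γ) (hγ1 : γ < 1)
    (hπ : ∀ s, π s ∈ stdSimplex ℝ A) (hρ : ∀ s, ρ s ∈ stdSimplex ℝ A) {δ : ℝ}
    (hδ : ∀ s, tvDist (π s) (ρ s) ≤ δ) :
    ‖V - W‖ ≤ 2 * (rmax / (1 - γ)) * δ / (1 - γ) := by
  refine pi_norm_le_div_one_sub hγ1 fun s => ?_
  rw [Pi.sub_apply, hV.sub_apply_eq hW s]
  have norm_le_bound : ‖W‖ ≤ rmax / (1 - γ) := hW.norm_le hP hr hγ0 hγ1 hρ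
  have bound_nonneg : 0 ≤ rmax / (1 - γ) := (norm_nonneg W).trans norm_le_bound
  have policy_change : ‖∑ a, (π s a - ρ s a) • actionValue P r γ W s a‖ ≤
      2 * (rmax / (1 - γ)) * δ :=
    (norm_sum_sub_smul_le_tvDist _ _ (hW.norm_actionValue_le hP hr hγ0 hγ1 hρ s)).trans
      (mul_le_mul_of_nonneg_left (hδ s) (by positivity))
  have propagated_gap : ‖∑ a, π s a • (actionValue P r γ V s a - actionValue P r γ W s a)‖ ≤
      γ * ‖V - W‖ :=
    norm_sum_smul_le_of_mem_stdSimplex (hπ s) (norm_actionValue_sub_le hP r hγ0 V W s)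
  exact norm_add_le_of_le policy_change propagated_gap

end IsValueFunction

theorem expected_value_difference_bound_general [Nonempty S]
    (hP : ∀ s a, P s a ∈ stdSimplex ℝ S) (hr : ∀ s a, ‖r s a‖ ≤ rmax) (hγ0 : 0 ≤ γ)
    (hγ1 : γ < 1) (hπ : ∀ s, π s ∈ stdSimplex ℝ A) (hρ : ∀ s, ρ s ∈ stdSimplex ℝ A)
    (hV : IsValueFunction P r γ π V) (hW : IsValueFunction P r γ ρ W)
    {μ : S → ℝ} (hμ : μ ∈ stdSimplex ℝ S) :
    (1 - γ) * ‖∑ s, μ s • (V s - W s)‖ ≤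
      (2 * rmax / (1 - γ)) *
        Finset.univ.sup' Finset.univ_nonempty (fun s => tvDist (π s) (ρ s)) := by
  have gap_le := hV.norm_sub_le hW hP hr hγ0 hγ1 hπ hρ
    (δ := Finset.univ.sup' Finset.univ_nonempty fun s => tvDist (π s) (ρ s))
    fun s => Finset.le_sup' (fun s => tvDist (π s) (ρ s)) (Finset.mem_univ s)
  have average_le := norm_sum_smul_le_of_mem_stdSimplex hμ (norm_le_pi_norm (V - W))
  rw [mul_div_assoc, ← le_div_iff₀' (sub_pos.mpr hγ1)]
  exact average_le.trans gap_le

end ValueFunctions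

/-- The expected value difference satisfies
`(1 − γ) Σ_s μ(s) (V^{πi}(s) − V^{πj}(s))
   ≤ (2 rmax / (1 − γ)) · max_s D_TV(πi(·|s), πj(·|s))`. -/
theorem expected_value_difference_bound
    {S A : Type*} [Fintype S] [Fintype A] [Nonempty S] [Nonempty A]
    (P : S → A → S → ℝ)
    (hP0 : ∀ s a s', 0 ≤ P s a s') (hP1 : ∀ s a, ∑ s', P s a s' = 1)
    (r : S → A → ℝ) (rmax : ℝ) (hr : ∀ s a, |r s a| ≤ rmax)
    (γ : ℝ) (hγ0 : 0 ≤ γ) (hγ1 : γ < 1)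
    (πi πj : S → A → ℝ)
    (hπi0 : ∀ s a, 0 ≤ πi s a) (hπi1 : ∀ s, ∑ a, πi s a = 1)
    (hπj0 : ∀ s a, 0 ≤ πj s a) (hπj1 : ∀ s, ∑ a, πj s a = 1)
    (Vi Vj : S → ℝ)
    (hVi : ∀ s, Vi s = ∑ a, πi s a * (r s a + γ * ∑ s', P s a s' * Vi s'))
    (hVj : ∀ s, Vj s = ∑ a, πj s a * (r s a + γ * ∑ s', P s a s' * Vj s'))
    (μ : S → ℝ) (hμ0 : ∀ s, 0 ≤ μ s) (hμ1 : ∑ s, μ s = 1) :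
    (1 - γ) * ∑ s, μ s * (Vi s - Vj s) ≤
      (2 * rmax / (1 - γ)) *
        Finset.univ.sup' Finset.univ_nonempty
          (fun s => (1 / 2 : ℝ) * ∑ a, |πi s a - πj s a|) :=
  (mul_le_mul_of_nonneg_left (le_abs_self _) (sub_pos.mpr hγ1).le).trans <|
    expected_value_difference_bound_general (fun s a => ⟨hP0 s a, hP1 s a⟩) hr hγ0 hγ1
      (fun s => ⟨hπi0 s, hπi1 s⟩) (fun s => ⟨hπj0 s, hπj1 s⟩) hVi hVj ⟨hμ0, hμ1⟩
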